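/- Symmetry preserving regularity lemma: For every function F : ℝ⁺×ℕ → ℝ⁺ that is decreasing in each coordinate and every ε > 0 there is a constant n such that for every finite nonempty set V and every symmetric matrix G : V×V → [-1,1] there is a decomposition G = S + E + R such that: (1) S is a step function with s ≤ n steps; (2) ‖gSg⁻¹ − S‖_∞ ≤ ε for every g ∈ Aut(G); (3) ‖E‖₂ ≤ ε; (4) ‖R‖_□ ≤ F(ε,s). -/

import Mathlib

open Finset

open Matrix in
lemma inv_aux {V : Type} [Fintype V] [DecidableEq V] (U B : Matrix V V ℝ) (d : V → ℝ)
    (hU : U * Uᵀ = 1) (hU' : Uᵀ * U = 1) (hB : B * Bᵀ = 1) (hB' : Bᵀ * B = 1)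
    (h : U * diagonal d * Uᵀ = B * diagonal d * Bᵀ) (f : ℝ → ℝ) :
    U * diagonal (fun i => f (d i)) * Uᵀ = B * diagonal (fun i => f (d i)) * Bᵀ := by
  have hQ : diagonal d * (Uᵀ * B) = (Uᵀ * B) * diagonal d := by
    calc diagonal d * (Uᵀ * B) = (Uᵀ * U) * diagonal d * Uᵀ * B := by
            rw [hU', Matrix.one_mul, Matrix.mul_assoc]
      _ = Uᵀ * (U * diagonal d * Uᵀ) * B := by simp only [Matrix.mul_assoc]
      _ = Uᵀ * (B * diagonal d * Bᵀ) * B := by rw [h]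
      _ = (Uᵀ * B) * diagonal d * (Bᵀ * B) := by simp only [Matrix.mul_assoc]
      _ = _ := by rw [hB', Matrix.mul_one]
  have hQf : diagonal (fun i => f (d i)) * (Uᵀ * B) = (Uᵀ * B) * diagonal (fun i => f (d i)) := by
    ext i j
    have := congrFun (congrFun hQ i) j
    rw [diagonal_mul, mul_diagonal] at this ⊢
    by_cases hd : d i = d j
    · rw [hd, mul_comm]
    · have h0 : (Uᵀ * B) i j = 0 := by
        have : (d i - d j) * (Uᵀ * B) i j = 0 := by linarith
        rcases mul_eq_zero.1 this with h | h
        · exact absurd (sub_eq_zero.1 h) hd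
        · exact h
      rw [h0]; simp
  calc _ = U * diagonal (fun i => f (d i)) * Uᵀ * (B * Bᵀ) := by rw [hB, Matrix.mul_one]
    _ = U * (diagonal (fun i => f (d i)) * (Uᵀ * B)) * Bᵀ := by simp only [Matrix.mul_assoc]
    _ = (U * Uᵀ) * B * diagonal (fun i => f (d i)) * Bᵀ := by
        rw [hQf]; simp only [Matrix.mul_assoc]
    _ = _ := by rw [hU, Matrix.one_mul]

open Matrix in
lemma spec_exists {V : Type} [Fintype V] [DecidableEq V] (G : V → V → ℝ)
    (hG : ∀ a b, G a b = G b a) : ∃ (d : V → ℝ) (U : Matrix V V ℝ), U * Uᵀ = 1 ∧ Uᵀ * U = 1 ∧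
      Matrix.of G = U * diagonal d * Uᵀ := by
  have hH : (Matrix.of G).IsHermitian := by
    ext a b; simp [hG a b]
  refine ⟨hH.eigenvalues, (hH.eigenvectorUnitary : Matrix V V ℝ), ?_, ?_, ?_⟩
  · have := Unitary.coe_mul_star_self hH.eigenvectorUnitary
    simpa [star_eq_conjTranspose] using this
  · have := Unitary.coe_star_mul_self hH.eigenvectorUnitary
    simpa [star_eq_conjTranspose] using this
  · have := hH.spectral_theorem
    simpa [Unitary.conjStarAlgAut_apply, star_eq_conjTranspose, Function.comp_def] using this

open Matrix in
lemma spec_scaled {V : Type} [Fintype V] [DecidableEq V] [Nonempty V] (G : V → V → ℝ)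
    (hG : ∀ a b, G a b = G b a) : ∃ (μ : V → ℝ) (v : V → V → ℝ),
      (∀ a b, G a b = ∑ i, μ i * v i a * v i b) ∧
      (∀ i j, ∑ a, v i a * v j a = if i = j then (Fintype.card V : ℝ) else 0) ∧
      (∀ a b, ∑ i, v i a * v i b = if a = b then (Fintype.card V : ℝ) else 0) ∧
      (∀ f : ℝ → ℝ, ∀ g : Equiv.Perm V, (∀ a b, G (g a) (g b) = G a b) → ∀ a b,
        ∑ i, f (μ i) * v i (g a) * v i (g b) = ∑ i, f (μ i) * v i a * v i b) := by
  obtain ⟨d, U, h1, h2, h3⟩ := spec_exists G hG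
  have hNpos : (0 : ℝ) < (Fintype.card V : ℝ) := by exact_mod_cast Fintype.card_pos
  generalize (Fintype.card V : ℝ) = N at hNpos ⊢
  have hs : √N * √N = N := Real.mul_self_sqrt hNpos.le
  have key : ∀ (e : V → ℝ) (B : Matrix V V ℝ) a b,
      (B * diagonal e * Bᵀ) a b = ∑ i, e i * B a i * B b i := by
    intro e B a b
    rw [Matrix.mul_apply]
    refine Finset.sum_congr rfl fun i _ => ?_
    rw [mul_diagonal, transpose_apply]; ring
  refine ⟨fun i => d i / N, fun i a => √N * U a i, ?_, ?_, ?_, ?_⟩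
  · intro a b
    have := congrFun (congrFun h3 a) b
    rw [key] at this
    simp only [of_apply] at this
    rw [this]
    refine Finset.sum_congr rfl fun i _ => ?_
    field_simp
    rw [Real.sq_sqrt hNpos.le]
  · intro i j
    have := congrFun (congrFun h2 i) j
    rw [Matrix.mul_apply, one_apply] at this
    simp only [transpose_apply] at this
    calc _ = N * ∑ a, U a i * U a j := by
          rw [Finset.mul_sum]
          refine Finset.sum_congr rfl fun a _ => ?_
          linear_combination (U a i * U a j) * hs
      _ = _ := by rw [this]; split_ifs <;> simp
  · intro i j
    have := congrFun (congrFun h1 i) j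
    rw [Matrix.mul_apply, one_apply] at this
    simp only [transpose_apply] at this
    calc _ = N * ∑ a, U i a * U j a := by
          rw [Finset.mul_sum]
          refine Finset.sum_congr rfl fun a _ => ?_
          linear_combination (U i a * U j a) * hs
      _ = _ := by rw [this]; split_ifs <;> simp
  · intro f g hg a b
    let B : Matrix V V ℝ := U.submatrix g id
    have e1 : B * Bᵀ = 1 := by
      have : B * Bᵀ = (U * Uᵀ).submatrix g g := by
        ext a b; simp [B, Matrix.mul_apply]
      rw [this, h1]; simp
    have e2 : Bᵀ * B = 1 := mul_eq_one_comm.1 e1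
    have e3 : U * diagonal d * Uᵀ = B * diagonal d * Bᵀ := by
      ext a b
      have t1 := congrFun (congrFun h3 a) b
      have t2 := congrFun (congrFun h3 (g a)) (g b)
      simp only [of_apply] at t1 t2
      rw [← t1, ← hg, t2, key, key]; simp [B]
    have := congrFun (congrFun (inv_aux U B d h1 h2 e1 e2 e3 (fun x => f (x / N))) a) b
    rw [key, key] at this
    have h5 : ∀ x y : V, ∑ i, f (d i / N) * (√N * U x i) * (√N * U y i)
        = N * ∑ i, f (d i / N) * U x i * U y i := by
      intro x y
      rw [Finset.mul_sum]
      refine Finset.sum_congr rfl fun i _ => ?_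
      linear_combination (f (d i / N) * U x i * U y i) * hs
    rw [h5, h5, this]; simp [B]

lemma hs_norm {V : Type} [Fintype V] [DecidableEq V] (v : V → V → ℝ) (N : ℝ)
    (h2 : ∀ i j, ∑ a, v i a * v j a = if i = j then N else 0) (c : V → ℝ) :
    ∑ a, ∑ b, (∑ i, c i * v i a * v i b) ^ 2 = N ^ 2 * ∑ i, c i ^ 2 := by
  calc ∑ a, ∑ b, (∑ i, c i * v i a * v i b) ^ 2
      = ∑ a, ∑ b, ∑ i, ∑ j, (c i * v i a * v i b) * (c j * v j a * v j b) := by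
        refine Finset.sum_congr rfl fun a _ => Finset.sum_congr rfl fun b _ => ?_
        rw [sq, Finset.sum_mul_sum]
    _ = ∑ i, ∑ j, ∑ a, ∑ b, (c i * v i a * v i b) * (c j * v j a * v j b) := by
        simp_rw [← Fintype.sum_prod_type']
        exact Fintype.sum_equiv ⟨fun x => (((x.2.2.1), (x.2.2.2), x.1, x.2.1) : V × V × V × V),
          fun x => (x.2.2.1, x.2.2.2, x.1, x.2.1), fun x => rfl, fun x => rfl⟩ _ _ (fun x => rfl)
    _ = ∑ i, ∑ j, c i * c j * ((∑ a, v i a * v j a) * (∑ b, v i b * v j b)) := by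
        refine Finset.sum_congr rfl fun i _ => Finset.sum_congr rfl fun j _ => ?_
        rw [Finset.sum_mul_sum, Finset.mul_sum]
        refine Finset.sum_congr rfl fun a _ => ?_
        rw [Finset.mul_sum]
        refine Finset.sum_congr rfl fun b _ => ?_
        ring
    _ = _ := by
        simp_rw [h2, Finset.mul_sum]
        refine Finset.sum_congr rfl fun i _ => ?_
        simp
        ring

lemma parseval {V : Type} [Fintype V] [DecidableEq V] (v : V → V → ℝ)
    (h3 : ∀ a b, ∑ i, v i a * v i b = if a = b then (Fintype.card V : ℝ) else 0)
    (f : V → ℝ) (hf : ∀ x, |f x| ≤ 1) :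
    ∑ i, (∑ a, f a * v i a) ^ 2 ≤ (Fintype.card V : ℝ) ^ 2 := by
  calc ∑ i, (∑ a, f a * v i a) ^ 2
      = ∑ i, ∑ a, ∑ b, (f a * v i a) * (f b * v i b) := by
        refine Finset.sum_congr rfl fun a _ => ?_
        rw [sq, Finset.sum_mul_sum]
    _ = ∑ a, ∑ b, ∑ i, (f a * v i a) * (f b * v i b) := by
        rw [Finset.sum_comm]
        refine Finset.sum_congr rfl fun a _ => ?_
        rw [Finset.sum_comm]
    _ = ∑ a, ∑ b, f a * f b * ∑ i, v i a * v i b := by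
        refine Finset.sum_congr rfl fun a _ => Finset.sum_congr rfl fun b _ => ?_
        rw [Finset.mul_sum]
        refine Finset.sum_congr rfl fun i _ => ?_
        ring
    _ = ∑ a, f a ^ 2 * (Fintype.card V : ℝ) := by
        simp_rw [h3]
        refine Finset.sum_congr rfl fun a _ => ?_
        simp [sq]
    _ ≤ ∑ a : V, 1 * (Fintype.card V : ℝ) := by
        refine Finset.sum_le_sum fun a _ => ?_
        gcongr
        exact (sq_le_one_iff_abs_le_one _).2 (hf a)
    _ = _ := by simp [sq]

lemma cut_bound {V : Type} [Fintype V] [DecidableEq V] (v : V → V → ℝ)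
    (h3 : ∀ a b, ∑ i, v i a * v i b = if a = b then (Fintype.card V : ℝ) else 0)
    (c : V → ℝ) (δ : ℝ) (hδ : 0 ≤ δ) (hc : ∀ i, |c i| ≤ δ)
    (f g : V → ℝ) (hf : ∀ x, |f x| ≤ 1) (hg : ∀ x, |g x| ≤ 1) :
    |∑ a, ∑ b, f a * (∑ i, c i * v i a * v i b) * g b| ≤ δ * (Fintype.card V : ℝ) ^ 2 := by
  have e : ∑ a, ∑ b, f a * (∑ i, c i * v i a * v i b) * g b
      = ∑ i, c i * ((∑ a, f a * v i a) * (∑ b, g b * v i b)) := by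
    calc _ = ∑ a, ∑ b, ∑ i, c i * ((f a * v i a) * (g b * v i b)) := by
          refine Finset.sum_congr rfl fun a _ => Finset.sum_congr rfl fun b _ => ?_
          rw [Finset.mul_sum, Finset.sum_mul]
          refine Finset.sum_congr rfl fun i _ => ?_
          ring
      _ = ∑ i, ∑ a, ∑ b, c i * ((f a * v i a) * (g b * v i b)) := by
          simp_rw [← Fintype.sum_prod_type']
          exact Fintype.sum_equiv ⟨fun x => ((x.2.2, x.1, x.2.1) : V × V × V),
            fun x => (x.2.1, x.2.2, x.1), fun x => rfl, fun x => rfl⟩ _ _ (fun x => rfl)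
      _ = _ := by
          refine Finset.sum_congr rfl fun i _ => ?_
          rw [Finset.sum_mul_sum, Finset.mul_sum]
          refine Finset.sum_congr rfl fun a _ => ?_
          rw [Finset.mul_sum]
  rw [e]
  have p1 := parseval v h3 f hf
  have p2 := parseval v h3 g hg
  calc _ ≤ ∑ i, |c i * ((∑ a, f a * v i a) * (∑ b, g b * v i b))| :=
        Finset.abs_sum_le_sum_abs _ _
    _ ≤ ∑ i, δ * (((∑ a, f a * v i a) ^ 2 + (∑ b, g b * v i b) ^ 2) / 2) := by
        refine Finset.sum_le_sum fun i _ => ?_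
        rw [abs_mul]
        refine mul_le_mul (hc i) ?_ (abs_nonneg _) hδ
        rw [abs_le]
        constructor
        · nlinarith [sq_nonneg ((∑ a, f a * v i a) + (∑ b, g b * v i b))]
        · nlinarith [sq_nonneg ((∑ a, f a * v i a) - (∑ b, g b * v i b))]
    _ = δ * ((∑ i, (∑ a, f a * v i a) ^ 2 + ∑ i, (∑ b, g b * v i b) ^ 2) / 2) := by
        rw [← Finset.mul_sum, ← Finset.sum_div, Finset.sum_add_distrib]
    _ ≤ _ := by
        refine mul_le_mul_of_nonneg_left ?_ hδ
        linarith

lemma eig_bound {V : Type} [Fintype V] [DecidableEq V] [Nonempty V] (G : V → V → ℝ)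
    (hG1 : ∀ a b, |G a b| ≤ 1) (μ : V → ℝ) (v : V → V → ℝ)
    (h1 : ∀ a b, G a b = ∑ i, μ i * v i a * v i b)
    (h2 : ∀ i j, ∑ a, v i a * v j a = if i = j then (Fintype.card V : ℝ) else 0) (i a : V) :
    |μ i| * |v i a| ≤ 1 := by
  have hNpos : (0 : ℝ) < (Fintype.card V : ℝ) := by exact_mod_cast Fintype.card_pos
  have e : ∑ b, G a b * v i b = (Fintype.card V : ℝ) * (μ i * v i a) := by
    simp_rw [h1, Finset.sum_mul]
    rw [Finset.sum_comm]
    calc _ = ∑ j, μ j * v j a * ∑ b, v j b * v i b := by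
          refine Finset.sum_congr rfl fun j _ => ?_
          rw [Finset.mul_sum]
          refine Finset.sum_congr rfl fun b _ => ?_
          ring
      _ = _ := by
          simp_rw [h2]; simp; ring
  have hb : |∑ b, G a b * v i b| ≤ (Fintype.card V : ℝ) := by
    have h5 : |∑ b, G a b * v i b| ≤ ∑ b, |v i b| := by
      refine (Finset.abs_sum_le_sum_abs _ _).trans (Finset.sum_le_sum fun b _ => ?_)
      rw [abs_mul]
      exact mul_le_of_le_one_left (abs_nonneg _) (hG1 a b)
    have h6 : (∑ b, |v i b|) ^ 2 ≤ (Fintype.card V : ℝ) ^ 2 := by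
      have := sq_sum_le_card_mul_sum_sq (s := (univ : Finset V)) (f := fun b => |v i b|)
      simp only [sq_abs] at this
      have h7 := h2 i i
      simp only [if_true, ← sq] at h7
      rw [h7] at this
      simpa [sq] using this
    exact h5.trans (abs_le_of_sq_le_sq' h6 hNpos.le).2
  rw [e, abs_mul, abs_mul, abs_of_pos hNpos] at hb
  nlinarith

lemma mu_sum {V : Type} [Fintype V] [DecidableEq V] [Nonempty V] (G : V → V → ℝ)
    (hG1 : ∀ a b, |G a b| ≤ 1) (μ : V → ℝ) (v : V → V → ℝ)
    (h1 : ∀ a b, G a b = ∑ i, μ i * v i a * v i b)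
    (h2 : ∀ i j, ∑ a, v i a * v j a = if i = j then (Fintype.card V : ℝ) else 0) :
    ∑ i, μ i ^ 2 ≤ 1 := by
  have hNpos : (0 : ℝ) < (Fintype.card V : ℝ) := by exact_mod_cast Fintype.card_pos
  have h := hs_norm v _ h2 μ
  simp_rw [← h1] at h
  have : ∑ a, ∑ b, G a b ^ 2 ≤ ∑ a : V, ∑ b : V, (1 : ℝ) :=
    Finset.sum_le_sum fun a _ => Finset.sum_le_sum fun b _ =>
      (sq_le_one_iff_abs_le_one _).2 (hG1 a b)
  rw [h] at this
  simp only [Finset.sum_const, Finset.card_univ, nsmul_eq_mul, mul_one, ← sq] at this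
  have hp : (0 : ℝ) < (Fintype.card V : ℝ) ^ 2 := by positivity
  nlinarith

lemma rounding {V : Type} [Fintype V] (I : Finset V) (μ : V → ℝ) (v : V → V → ℝ)
    (C η : ℝ) (hC : 0 < C) (hη : 0 < η) (K : ℕ) (hK : I.card ≤ K) (hμ : ∀ i ∈ I, |μ i| ≤ 1)
    (hv : ∀ i ∈ I, ∀ a, |v i a| ≤ C) :
    ∃ (s : ℕ) (P : V → Fin s) (T : Fin s → Fin s → ℝ), s ≤ (⌊2 * C / η⌋₊ + 1) ^ K ∧
      Function.Surjective P ∧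
      ∀ a b, |∑ i ∈ I, μ i * v i a * v i b - T (P a) (P b)| ≤ K * (2 * η * C) := by
  classical
  have hfl : ∀ i ∈ I, ∀ a, ⌊(v i a + C) / η⌋₊ < ⌊2 * C / η⌋₊ + 1 := by
    intro i hi a
    rw [Nat.lt_succ_iff]
    apply Nat.floor_le_floor
    have := (abs_le.1 (hv i hi a)).2
    gcongr
    linarith
  let q : V → (I → Fin (⌊2 * C / η⌋₊ + 1)) := fun a i => ⟨⌊(v i a + C) / η⌋₊, hfl i i.2 a⟩
  have hq : ∀ a a', q a = q a' → ∀ i ∈ I, |v i a - v i a'| ≤ η := by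
    intro a a' h i hi
    have h1 := congrArg Fin.val (congrFun h ⟨i, hi⟩)
    simp only [q] at h1
    have nn : ∀ x, 0 ≤ (v i x + C) / η := fun x =>
      div_nonneg (by linarith [(abs_le.1 (hv i hi x)).1]) hη.le
    have a1 := Nat.floor_le (nn a)
    have a2 := Nat.lt_floor_add_one ((v i a + C) / η)
    have b1 := Nat.floor_le (nn a')
    have b2 := Nat.lt_floor_add_one ((v i a' + C) / η)
    rw [h1] at a1 a2
    have e : v i a - v i a' = ((v i a + C) / η - (v i a' + C) / η) * η := by
      field_simp; ring
    rw [e, abs_mul, abs_of_pos hη]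
    apply mul_le_of_le_one_left hη.le
    rw [abs_le]; constructor <;> linarith
  let e := Fintype.equivFin (Set.range q)
  have hrep : ∀ y : Set.range q, ∃ a, q a = y := fun y => y.2
  choose rep hrep using hrep
  refine ⟨Fintype.card (Set.range q), fun a => e ⟨q a, a, rfl⟩,
    fun x y => ∑ i ∈ I, μ i * v i (rep (e.symm x)) * v i (rep (e.symm y)), ?_, ?_, ?_⟩
  · calc Fintype.card (Set.range q) ≤ Fintype.card (I → Fin (⌊2 * C / η⌋₊ + 1)) :=
          Fintype.card_le_of_injective _ Subtype.val_injective
      _ = (⌊2 * C / η⌋₊ + 1) ^ I.card := by simp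
      _ ≤ _ := Nat.pow_le_pow_right (Nat.succ_pos _) hK
  · intro x
    obtain ⟨a, ha⟩ := (e.symm x).2
    refine ⟨a, ?_⟩
    rw [← Equiv.eq_symm_apply]
    exact Subtype.ext ha
  · intro a b
    simp only [Equiv.symm_apply_apply]
    have ha := hrep ⟨q a, a, rfl⟩
    have hb := hrep ⟨q b, b, rfl⟩
    generalize rep ⟨q a, a, rfl⟩ = a' at ha
    generalize rep ⟨q b, b, rfl⟩ = b' at hb
    rw [← Finset.sum_sub_distrib]
    calc _ ≤ ∑ i ∈ I, |μ i * v i a * v i b - μ i * v i a' * v i b'| :=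
          Finset.abs_sum_le_sum_abs _ _
      _ ≤ ∑ i ∈ I, 2 * η * C := by
          refine Finset.sum_le_sum fun i hi => ?_
          have x1 := hq a a' ha.symm i hi
          have x2 := hq b b' hb.symm i hi
          have e : μ i * v i a * v i b - μ i * v i a' * v i b'
            = μ i * ((v i a - v i a') * v i b + v i a' * (v i b - v i b')) := by ring
          rw [e, abs_mul]
          refine (mul_le_of_le_one_left (abs_nonneg _) (hμ i hi)).trans ?_
          refine (abs_add_le _ _).trans ?_
          rw [abs_mul, abs_mul]
          have y1 := mul_le_mul x1 (hv i hi b) (abs_nonneg _) hη.le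
          have y2 := mul_le_mul (hv i hi a') x2 (abs_nonneg _) hC.le
          linarith
      _ = I.card * (2 * η * C) := by simp
      _ ≤ _ := by gcongr

lemma pigeon {V : Type} [Fintype V] (μ : V → ℝ) (hμ : ∑ i, μ i ^ 2 ≤ 1) (d : ℕ → ℝ)
    (hd : ∀ k, d (k + 1) ≤ d k) (m : ℕ) (hm : 0 < m) :
    ∃ k < m, ∑ i, (if |μ i| ≤ d k ∧ d (k + 1) < |μ i| then μ i else 0) ^ 2 ≤ 1 / m := by
  by_contra! h
  let t : ℕ → ℝ := fun k => ∑ i, if d k < |μ i| then μ i ^ 2 else 0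
  have ht : ∀ k, ∑ i, (if |μ i| ≤ d k ∧ d (k + 1) < |μ i| then μ i else 0) ^ 2
      = t (k + 1) - t k := by
    intro k
    simp only [t]
    rw [← Finset.sum_sub_distrib]
    refine Finset.sum_congr rfl fun i _ => ?_
    have := hd k
    split_ifs with x y z w u <;> first | (exfalso; grind; done) | (simp; done)
  have h1 : ∑ k ∈ Finset.range m, (t (k + 1) - t k) = t m - t 0 := Finset.sum_range_sub t m
  have h2 : t m ≤ 1 := by
    refine le_trans (Finset.sum_le_sum fun i _ => ?_) hμ
    split_ifs
    · exact le_rfl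
    · positivity
  have h3 : 0 ≤ t 0 := Finset.sum_nonneg fun i _ => by split_ifs <;> positivity
  have h4 : ∑ k ∈ Finset.range m, (1 / m : ℝ) < ∑ k ∈ Finset.range m, (t (k + 1) - t k) := by
    refine Finset.sum_lt_sum_of_nonempty (by simpa using hm.ne') fun k hk => ?_
    rw [← ht]
    exact h k (Finset.mem_range.1 hk)
  have hm' : (m : ℝ) ≠ 0 := by exact_mod_cast hm.ne'
  rw [h1] at h4
  simp [hm'] at h4
  linarith

lemma three_split (x δ δ' : ℝ) (h : δ' ≤ δ) :
    x = (if δ < |x| then x else 0) + (if |x| ≤ δ ∧ δ' < |x| then x else 0)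
      + (if |x| ≤ δ' then x else 0) := by
  rcases lt_or_ge δ |x| with h1 | h1
  · have h2 : δ' < |x| := h.trans_lt h1
    simp [h1, h1.not_ge, h2.not_ge]
  · rcases lt_or_ge δ' |x| with h2 | h2
    · simp [h1, h1.not_gt, h2, h2.not_ge]
    · simp [h1.not_gt, h2, h2.not_gt]

/-- Bound on the number of steps. -/
noncomputable def stepBound (ε δ : ℝ) : ℕ :=
  (⌊2 * (1 / δ) / (ε * δ / (4 * (⌊1 / δ ^ 2⌋₊ + 1)))⌋₊ + 1) ^ ⌊1 / δ ^ 2⌋₊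

/-- Sequence of thresholds. -/
noncomputable def thr (F : ℝ → ℕ → ℝ) (ε : ℝ) : ℕ → ℝ
  | 0 => 1
  | k + 1 => min (thr F ε k) (F ε (stepBound ε (thr F ε k)))

lemma step_part {V : Type} [Fintype V] (μ : V → ℝ) (v : V → V → ℝ)
    (hμ : ∑ i, μ i ^ 2 ≤ 1) (hv : ∀ i a, |μ i| * |v i a| ≤ 1) (ε δ : ℝ) (hε : 0 < ε)
    (hδ : 0 < δ) :
    ∃ (s : ℕ) (P : V → Fin s) (T : Fin s → Fin s → ℝ), s ≤ stepBound ε δ ∧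
      Function.Surjective P ∧
      ∀ a b, |∑ i, (if δ < |μ i| then μ i else 0) * v i a * v i b - T (P a) (P b)| ≤ ε / 2 := by
  classical
  let I : Finset V := univ.filter fun i => δ < |μ i|
  have hI : ∀ i ∈ I, δ < |μ i| := fun i hi => (Finset.mem_filter.1 hi).2
  have hK : I.card ≤ ⌊1 / δ ^ 2⌋₊ := by
    apply Nat.le_floor
    rw [le_div_iff₀ (by positivity)]
    calc (I.card : ℝ) * δ ^ 2 = ∑ i ∈ I, δ ^ 2 := by simp
      _ ≤ ∑ i ∈ I, μ i ^ 2 := Finset.sum_le_sum fun i hi => by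
          rw [← sq_abs (μ i)]
          have := hI i hi
          gcongr
      _ ≤ ∑ i, μ i ^ 2 := Finset.sum_le_sum_of_subset_of_nonneg (Finset.subset_univ _)
          fun i _ _ => sq_nonneg _
      _ ≤ 1 := hμ
  obtain ⟨s, P, T, h1, h2, h3⟩ := rounding I μ v (1 / δ) (ε * δ / (4 * (⌊1 / δ ^ 2⌋₊ + 1)))
    (by positivity) (by positivity) _ hK
    (fun i _ => by
      have : μ i ^ 2 ≤ ∑ i, μ i ^ 2 :=
        Finset.single_le_sum (f := fun i => μ i ^ 2) (fun i _ => sq_nonneg _) (Finset.mem_univ i)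
      exact (sq_le_one_iff_abs_le_one _).1 (this.trans hμ))
    (fun i hi a => by
      rw [le_div_iff₀ hδ]
      have := hI i hi
      have := hv i a
      nlinarith [abs_nonneg (v i a)])
  refine ⟨s, P, T, h1, h2, fun a b => ?_⟩
  have e : ∑ i, (if δ < |μ i| then μ i else 0) * v i a * v i b = ∑ i ∈ I, μ i * v i a * v i b := by
    simp only [I]
    rw [Finset.sum_filter]
    refine Finset.sum_congr rfl fun i _ => ?_
    split_ifs <;> simp
  rw [e]
  refine (h3 a b).trans ?_
  generalize (⌊1 / δ ^ 2⌋₊) = K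
  have : (K : ℝ) * (2 * (ε * δ / (4 * (K + 1))) * (1 / δ)) = ε / 2 * (K / (K + 1)) := by
    field_simp; ring
  rw [this]
  apply mul_le_of_le_one_right (by positivity)
  rw [div_le_one (by positivity)]
  linarith

/-- **Symmetry preserving regularity lemma.** For every function `F : ℝ⁺ × ℕ → ℝ⁺` decreasing in
each coordinate and every `ε > 0` there is `n` such that every symmetric matrix
`G : V × V → [-1,1]` on a finite nonempty set `V` decomposes as `G = S + E + R` where `S` is a
step function with `s ≤ n` steps, `‖gSg⁻¹ - S‖_∞ ≤ ε` for every `g ∈ Aut(G)`, `‖E‖₂ ≤ ε` and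
`‖R‖_□ ≤ F(ε,s)` (all norms normalized by the uniform probability measure on `V`). -/
theorem symmetry_preserving_regularity_lemma
    (F : ℝ → ℕ → ℝ) (hFpos : ∀ (x : ℝ) (s : ℕ), 0 < x → 0 < F x s)
    (hFdec₁ : ∀ s : ℕ, ∀ x₁ x₂ : ℝ, 0 < x₁ → x₁ ≤ x₂ → F x₂ s ≤ F x₁ s)
    (hFdec₂ : ∀ x : ℝ, 0 < x → ∀ s₁ s₂ : ℕ, s₁ ≤ s₂ → F x s₂ ≤ F x s₁)
    (ε : ℝ) (hε : 0 < ε) :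
    ∃ n : ℕ, ∀ (V : Type) (_ : Fintype V) (_ : Nonempty V) (G : V → V → ℝ),
      (∀ a b, G a b = G b a) → (∀ a b, |G a b| ≤ 1) →
      ∃ (s : ℕ) (S E R : V → V → ℝ),
        s ≤ n ∧
        (∀ a b, G a b = S a b + E a b + R a b) ∧
        -- `S` is a step function with `s` steps
        (∃ (P : V → Fin s) (T : Fin s → Fin s → ℝ),
          Function.Surjective P ∧ ∀ a b, S a b = T (P a) (P b)) ∧
        -- approximate invariance of `S` under every automorphism of `G`
        (∀ g : Equiv.Perm V, (∀ a b, G (g a) (g b) = G a b) →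
          ∀ a b, |S (g.symm a) (g.symm b) - S a b| ≤ ε) ∧
        -- `‖E‖₂ ≤ ε`
        ((∑ a : V, ∑ b : V, (E a b) ^ 2) / (Fintype.card V : ℝ) ^ 2 ≤ ε ^ 2) ∧
        -- `‖R‖_□ ≤ F(ε, s)`
        (∀ f g : V → ℝ, (∀ x, |f x| ≤ 1) → (∀ x, |g x| ≤ 1) →
          |∑ a : V, ∑ b : V, f a * R a b * g b| / (Fintype.card V : ℝ) ^ 2 ≤ F ε s) := by
  classical
  have hpos : ∀ k, 0 < thr F ε k := by
    intro k
    induction k with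
    | zero => simp [thr]
    | succ k ih => exact lt_min ih (hFpos _ _ hε)
  obtain ⟨m, hm⟩ := exists_nat_gt (4 / ε ^ 2)
  have hm0 : (0 : ℝ) < m := lt_trans (by positivity) hm
  have hm0' : 0 < m := by exact_mod_cast hm0
  refine ⟨(Finset.range m).sup fun k => stepBound ε (thr F ε k), ?_⟩
  intro V _ _ G hG hG1
  have hNpos : (0 : ℝ) < (Fintype.card V : ℝ) := by exact_mod_cast Fintype.card_pos
  obtain ⟨μ, v, h1, h2, h3, h4⟩ := spec_scaled G hG
  have hμ := mu_sum G hG1 μ v h1 h2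
  have hv := eig_bound G hG1 μ v h1 h2
  obtain ⟨k, hk, hk2⟩ := pigeon μ hμ (thr F ε) (fun k => min_le_left _ _) m hm0'
  obtain ⟨s, P, T, hs, hP, hT⟩ := step_part μ v hμ hv ε (thr F ε k) hε (hpos k)
  have hle : thr F ε (k + 1) ≤ thr F ε k := min_le_left _ _
  have hF : thr F ε (k + 1) ≤ F ε s :=
    (min_le_right _ _).trans (hFdec₂ ε hε _ _ hs)
  have hp1 := hpos (k + 1)
  have hsn : s ≤ (Finset.range m).sup fun k => stepBound ε (thr F ε k) :=
    hs.trans (Finset.le_sup (f := fun k => stepBound ε (thr F ε k)) (Finset.mem_range.2 hk))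
  generalize thr F ε (k + 1) = δ' at hk2 hle hF hp1
  generalize thr F ε k = δ at hk2 hle hT
  let c1 : V → ℝ := fun i => if δ < |μ i| then μ i else 0
  let c2 : V → ℝ := fun i => if |μ i| ≤ δ ∧ δ' < |μ i| then μ i else 0
  let c3 : V → ℝ := fun i => if |μ i| ≤ δ' then μ i else 0
  have hc : ∀ i, μ i = c1 i + c2 i + c3 i := by
    intro i
    exact three_split (μ i) δ δ' hle
  let S1 : V → V → ℝ := fun a b => ∑ i, c1 i * v i a * v i b
  let S2 : V → V → ℝ := fun a b => ∑ i, c2 i * v i a * v i b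
  let S3 : V → V → ℝ := fun a b => ∑ i, c3 i * v i a * v i b
  have hT' : ∀ a b, |S1 a b - T (P a) (P b)| ≤ ε / 2 := hT
  have hsum : ∀ a b, G a b = S1 a b + S2 a b + S3 a b := by
    intro a b
    simp only [S1, S2, S3]
    rw [h1, ← Finset.sum_add_distrib, ← Finset.sum_add_distrib]
    refine Finset.sum_congr rfl fun i _ => ?_
    rw [hc i]; ring
  refine ⟨s, fun a b => T (P a) (P b), fun a b => S2 a b + (S1 a b - T (P a) (P b)), S3,
    ?_, ?_, ⟨P, T, hP, fun _ _ => rfl⟩, ?_, ?_, ?_⟩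
  · exact hsn
  · intro a b
    rw [hsum]; ring
  · intro g hg a b
    have e : S1 (g.symm a) (g.symm b) = S1 a b := by
      have := h4 (fun x => if δ < |x| then x else 0) g hg (g.symm a) (g.symm b)
      simp only [Equiv.apply_symm_apply] at this
      exact this.symm
    have t1 := abs_le.1 (hT' a b)
    have t2 := abs_le.1 (hT' (g.symm a) (g.symm b))
    rw [e] at t2
    rw [abs_le]
    constructor <;> linarith [t1.1, t1.2, t2.1, t2.2]
  · rw [div_le_iff₀ (by positivity)]
    have hS2 : ∑ a, ∑ b, S2 a b ^ 2 ≤ (Fintype.card V : ℝ) ^ 2 * (ε ^ 2 / 4) := by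
      have := hs_norm v _ h2 c2
      simp only [S2]
      rw [this]
      gcongr
      refine hk2.trans ?_
      rw [div_lt_iff₀ (by positivity)] at hm
      rw [div_le_iff₀ hm0]
      linarith
    calc _ ≤ ∑ a, ∑ b, (2 * S2 a b ^ 2 + ε ^ 2 / 2) := by
          refine Finset.sum_le_sum fun a _ => Finset.sum_le_sum fun b _ => ?_
          have : (S1 a b - T (P a) (P b)) ^ 2 ≤ (ε / 2) ^ 2 :=
            sq_le_sq' (abs_le.1 (hT' a b)).1 (abs_le.1 (hT' a b)).2
          nlinarith [sq_nonneg (S2 a b - (S1 a b - T (P a) (P b)))]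
      _ = 2 * ∑ a, ∑ b, S2 a b ^ 2 + (Fintype.card V : ℝ) ^ 2 * (ε ^ 2 / 2) := by
          simp_rw [Finset.sum_add_distrib, ← Finset.mul_sum]
          simp; ring
      _ ≤ _ := by linarith
  · intro f g hf hg
    rw [div_le_iff₀ (by positivity)]
    refine (cut_bound v h3 c3 δ' hp1.le (fun i => ?_) f g hf hg).trans ?_
    · simp only [c3]
      split_ifs with h
      · exact h
      · simpa using hp1.le
    · gcongr
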